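/- arXiv:1906.10573 — 10 statements merged into one kernel-verified Lean document; each statement's English description precedes it below -/
import Mathlib

section
/- Every nonempty Polish space 𝒳 has a total open admissible representation: there exists δ : (ℕ → ℕ) → 𝒳 which is continuous, surjective, and an open map, and such that for every set S ⊆ (ℕ → ℕ) and every function h : (ℕ → ℕ) → 𝒳 that is continuous on S, there exists τ : (ℕ → ℕ) → (ℕ → ℕ) continuous on S with h x = δ (τ x) for all x ∈ S. -/
/-!
The representation is induced by a Suslin scheme of nonempty open sets `A l`, indexed by finite
sequences `l` of naturals: `A [] = univ`, the children of `A l` cover `A l` and have closure inside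
`A l`, and diameters vanish along branches (`exists_open_scheme`). For such a scheme `δ x` is the
unique point in the intersection of the `A l` over the prefixes `l` of `x`. The covering condition
makes `δ` map the cylinder of a prefix `l` *onto* `A l`, so `δ` is open and surjective.

For admissibility, let `h` be continuous on `S`. A name `τ x` of `h x` is built digit by digit: when
a prefix `l` with `h x ∈ A l` has been produced, the next digit must be some `i` with
`h x ∈ A (i :: l)`. Searching for the least code of a pair `(m, i)` such that `h` sends the part of
`S` inside the cylinder of length `m` around `x` into `A (i :: l)` yields a digit depending only on
a finite prefix of `x` (`exists_locally_constant_choice`). Hence every prefix of `τ x` is locally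
constant in `x`, and `τ` is continuous.
-/

open Set Filter Topology PiNat CantorScheme

/-- A nonempty open set is the union of countably many nonempty open sets of small diameter whose
closures it contains. -/
theorem exists_small_open_cover {X : Type*} [MetricSpace X] [SecondCountableTopology X]
    (u : Set X) (hu : IsOpen u) (hne : u.Nonempty) (ε : ENNReal) (hε : 0 < ε) :
    ∃ V : ℕ → Set X, (∀ n, IsOpen (V n) ∧ (V n).Nonempty) ∧
      (∀ n, closure (V n) ⊆ u ∧ Metric.ediam (V n) ≤ ε) ∧ ∀ p ∈ u, ∃ n, p ∈ V n := by
  let B := {b ∈ TopologicalSpace.countableBasis X | closure b ⊆ u ∧ Metric.ediam b ≤ ε}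
  have hB : ∀ p ∈ u, ∃ b ∈ B, p ∈ b := by
    intro p hp
    obtain ⟨r, hr, hru⟩ := Metric.nhds_basis_closedEBall.mem_iff.1 (hu.mem_nhds hp)
    have hpos : 0 < min r (ε / 2) := lt_min hr (ENNReal.half_pos hε.ne')
    obtain ⟨b, hb, hpb, hbs⟩ := (TopologicalSpace.isBasis_countableBasis X).exists_subset_of_mem_open
      (Metric.mem_eball_self hpos) (Metric.isOpen_eball (x := p) (ε := min r (ε / 2)))
    have hbs' := hbs.trans Metric.eball_subset_closedEBall
    refine ⟨b, ⟨hb, ?_, ?_⟩, hpb⟩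
    · exact (closure_minimal hbs' Metric.isClosed_closedEBall).trans
        ((Metric.closedEBall_subset_closedEBall (min_le_left _ _)).trans hru)
    · refine (Metric.ediam_mono hbs').trans (Metric.ediam_closedEBall_le.trans ?_)
      calc 2 * min r (ε / 2) ≤ 2 * (ε / 2) := by gcongr; exact min_le_right _ _
        _ = ε := ENNReal.mul_div_cancel (by simp) (by simp)
  have hBne : B.Nonempty := by
    obtain ⟨p, hp⟩ := hne
    obtain ⟨b, hb, -⟩ := hB p hp
    exact ⟨b, hb⟩
  have hBc : B.Countable := (TopologicalSpace.countable_countableBasis X).mono (sep_subset _ _)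
  obtain ⟨V, hV⟩ := hBc.exists_eq_range hBne
  have hmem : ∀ n, V n ∈ B := fun n => hV ▸ mem_range_self n
  refine ⟨V, fun n => ⟨TopologicalSpace.isOpen_of_mem_countableBasis (hmem n).1,
    TopologicalSpace.nonempty_of_mem_countableBasis (hmem n).1⟩, fun n => (hmem n).2, ?_⟩
  intro p hp
  obtain ⟨b, hb, hpb⟩ := hB p hp
  rw [hV] at hb
  obtain ⟨n, rfl⟩ := hb
  exact ⟨n, hpb⟩

/-- The Suslin scheme behind the representation, obtained by iterating `exists_small_open_cover`:
the children of `A l` form such a cover with diameters at most `2⁻¹ ^ l.length`. -/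
theorem exists_open_scheme (X : Type*) [MetricSpace X] [SecondCountableTopology X] [Nonempty X] :
    ∃ A : List ℕ → Set X, A [] = univ ∧ (∀ l, IsOpen (A l)) ∧ (∀ l, (A l).Nonempty) ∧
      ClosureAntitone A ∧ VanishingDiam A ∧ ∀ l, ∀ p ∈ A l, ∃ i, p ∈ A (i :: l) := by
  have hpos : ∀ n : ℕ, (0 : ENNReal) < 2⁻¹ ^ n := fun n =>
    pos_of_ne_zero (pow_ne_zero _ (by simp))
  choose V hVo hVs hVc using fun (u : {u : Set X // IsOpen u ∧ u.Nonempty}) (n : ℕ) =>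
    exists_small_open_cover u.1 u.2.1 u.2.2 (2⁻¹ ^ n) (hpos n)
  let A : List ℕ → {u : Set X // IsOpen u ∧ u.Nonempty} := fun l =>
    l.rec ⟨univ, isOpen_univ, univ_nonempty⟩ fun i l u => ⟨V u l.length i, hVo u l.length i⟩
  refine ⟨fun l => (A l).1, rfl, fun l => (A l).2.1, fun l => (A l).2.2,
    fun l i => (hVs (A l) l.length i).1, fun x => ?_, fun l p hp => hVc (A l) l.length p hp⟩
  rw [← tendsto_add_atTop_iff_nat 1]
  refine tendsto_of_tendsto_of_tendsto_of_le_of_le tendsto_const_nhds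
    (ENNReal.tendsto_pow_atTop_nhds_zero_of_lt_one (r := 2⁻¹) (by simp)) (fun _ => zero_le)
    fun n => ?_
  exact (hVs (A (res x n)) (res x n).length (x n)).2.trans_eq (by rw [res_length])

/-- Sequences may be defined by prescribing each term as a function of the preceding prefix. -/
theorem exists_seq_of_res (f : ℕ → List ℕ → ℕ) : ∃ z : ℕ → ℕ, ∀ k, z k = f k (res z k) := by
  let t : ℕ → List ℕ := fun k => k.rec [] fun k l => f k l :: l
  have ht : ∀ k, res (fun k => f k (t k)) k = t k := by
    intro k
    induction k with
    | zero => rfl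
    | succ k ih => rw [res_succ, ih]
  exact ⟨fun k => f k (t k), fun k => by rw [ht]⟩

theorem nhds_basis_cylinder (x : ℕ → ℕ) :
    (𝓝 x).HasBasis (fun _ : ℕ => True) (cylinder x) := by
  refine ⟨fun s => ⟨fun hs => ?_, fun ⟨n, _, hn⟩ => ?_⟩⟩
  · obtain ⟨_, ⟨y, n, rfl⟩, hx, hs⟩ :=
      (isTopologicalBasis_cylinders (fun _ : ℕ => ℕ)).mem_nhds_iff.1 hs
    exact ⟨n, trivial, by rwa [mem_cylinder_iff_eq.1 hx]⟩
  · exact mem_of_superset ((isOpen_cylinder _ x n).mem_nhds (self_mem_cylinder x n)) hn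

/-- Locally constant selection on Baire space: an index `i` such that `W i` is a neighbourhood of
`x` within `S` can be picked in a locally constant way wherever such an index exists. -/
theorem exists_locally_constant_choice (S : Set (ℕ → ℕ)) (W : ℕ → Set (ℕ → ℕ)) :
    ∃ f : (ℕ → ℕ) → ℕ, ∀ x, (∃ i, W i ∈ 𝓝[S] x) →
      (x ∈ S → x ∈ W (f x)) ∧ ∀ᶠ y in 𝓝 x, f y = f x := by
  classical
  -- `k` codes a pair: the length of a cylinder and the index of a set containing it within `S`.
  let Q : ℕ → (ℕ → ℕ) → Prop := fun k x => cylinder x k.unpair.1 ∩ S ⊆ W k.unpair.2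
  refine ⟨fun x => if h : ∃ k, Q k x then (Nat.find h).unpair.2 else 0, fun x hx => ?_⟩
  have h : ∃ k, Q k x := by
    obtain ⟨i, hi⟩ := hx
    obtain ⟨m, -, hm⟩ := ((nhds_basis_cylinder x).inf_principal S).mem_iff.1 hi
    exact ⟨Nat.pair m i, by simpa [Q] using hm⟩
  refine ⟨fun hxS => ?_, ?_⟩
  · simp only [dif_pos h]
    exact Nat.find_spec h ⟨self_mem_cylinder _ _, hxS⟩
  · filter_upwards [(isOpen_cylinder _ x (Nat.find h)).mem_nhds (self_mem_cylinder x _)] with y hy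
    -- All codes up to the least one involve cylinders of length at most `Nat.find h`,
    -- since `k.unpair.1 ≤ k`.
    have hQ : ∀ k ≤ Nat.find h, (Q k y ↔ Q k x) := fun k hk => by
      have : cylinder y k.unpair.1 = cylinder x k.unpair.1 :=
        mem_cylinder_iff_eq.1 (cylinder_anti x ((Nat.unpair_left_le k).trans hk) hy)
      simp only [Q, this]
    have h' : ∃ k, Q k y := ⟨_, (hQ _ le_rfl).2 (Nat.find_spec h)⟩
    have : Nat.find h' = Nat.find h := (Nat.find_eq_iff h').2
      ⟨(hQ _ le_rfl).2 (Nat.find_spec h), fun k hk => (hQ k hk.le).not.2 (Nat.find_min h hk)⟩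
    simp only [dif_pos h, dif_pos h', this]

/-- Every nonempty Polish space has a total open admissible representation. -/
theorem exists_total_open_admissible_representation
    (𝒳 : Type*) [TopologicalSpace 𝒳] [PolishSpace 𝒳] [Nonempty 𝒳] :
    ∃ δ : (ℕ → ℕ) → 𝒳, Continuous δ ∧ Function.Surjective δ ∧ IsOpenMap δ ∧
      ∀ (S : Set (ℕ → ℕ)) (h : (ℕ → ℕ) → 𝒳), ContinuousOn h S →
        ∃ τ : (ℕ → ℕ) → (ℕ → ℕ), ContinuousOn τ S ∧ ∀ x ∈ S, h x = δ (τ x) := by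
  let := TopologicalSpace.upgradeIsCompletelyMetrizable 𝒳
  obtain ⟨A, hnil, hopen, hne, hanti, hdiam, hcover⟩ := exists_open_scheme 𝒳
  have hdom := hanti.map_of_vanishingDiam hdiam hne
  let δ : (ℕ → ℕ) → 𝒳 := fun x => (inducedMap A).2 ⟨x, hdom ▸ mem_univ x⟩
  have hmem : ∀ x n, δ x ∈ A (res x n) := fun x n => map_mem _ n
  have huniq : ∀ x p, (∀ n, p ∈ A (res x n)) → p = δ x := by
    intro x p hp
    refine dist_le_zero.1 (le_of_forall_pos_le_add fun ε hε => ?_)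
    obtain ⟨n, hn⟩ := hdiam.dist_lt ε hε x
    simpa using (hn p (hp n) _ (hmem x n)).le
  have himage : ∀ x n, δ '' cylinder x n = A (res x n) := by
    intro x n
    refine Subset.antisymm ?_ fun p hp => ?_
    · rintro _ ⟨y, hy, rfl⟩
      rw [cylinder_eq_res] at hy
      exact hy ▸ hmem y n
    · choose! g hg using fun l => hcover l p
      -- Follow `x` for `n` digits, then keep choosing children that contain `p`.
      obtain ⟨z, hz⟩ := exists_seq_of_res fun k l => if k < n then x k else g l
      have hzx : z ∈ cylinder x n := fun k hk => by rw [hz, if_pos hk]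
      refine ⟨z, hzx, (huniq z p fun k => ?_).symm⟩
      rw [cylinder_eq_res] at hzx
      rcases le_total k n with hk | hk
      · have : Antitone fun n => A (res z n) :=
          antitone_nat_of_succ_le fun n => hanti.antitone _ _
        refine this hk ?_
        change p ∈ A (res z n)
        rwa [hzx]
      · induction k, hk using Nat.le_induction with
        | base => rwa [hzx]
        | succ k hk ih =>
          rw [res_succ, hz, if_neg hk.not_gt]
          exact hg _ ih
  refine ⟨δ, hdiam.map_continuous.comp (by fun_prop), fun p => ?_, ?_, fun S h hh => ?_⟩
  · have : p ∈ δ '' cylinder 0 0 := by rw [himage, res_zero, hnil]; trivial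
    obtain ⟨z, -, hz⟩ := this
    exact ⟨z, hz⟩
  · refine (isTopologicalBasis_cylinders (fun _ : ℕ => ℕ)).isOpenMap_iff.2 ?_
    rintro _ ⟨x, n, rfl⟩
    rw [himage]
    exact hopen _
  · choose f hf using fun l : List ℕ =>
      exists_locally_constant_choice S fun i => {y | h y ∈ A (i :: l)}
    choose τ hτ using fun x => exists_seq_of_res fun _ l => f l x
    have key : ∀ x ∈ S, ∀ k, h x ∈ A (res (τ x) k) ∧
        ∀ᶠ y in 𝓝 x, res (τ y) k = res (τ x) k := by
      intro x hx k
      induction k with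
      | zero => simp [hnil]
      | succ k ih =>
        obtain ⟨i, hi⟩ := hcover _ _ ih.1
        obtain ⟨h1, h2⟩ := hf (res (τ x) k) x ⟨i, hh x hx ((hopen _).mem_nhds hi)⟩
        refine ⟨?_, ?_⟩
        · rw [res_succ, hτ]
          exact h1 hx
        · filter_upwards [ih.2, h2] with y hy hy2
          rw [res_succ, res_succ, hτ y, hτ x, hy, hy2]
    refine ⟨τ, fun x hx => ContinuousAt.continuousWithinAt ?_,
      fun x hx => huniq _ _ fun n => (key x hx n).1⟩
    refine (nhds_basis_cylinder (τ x)).tendsto_right_iff.2 fun n _ => ?_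
    filter_upwards [(key x hx n).2] with y hy
    rw [cylinder_eq_res]
    exact hy
end

section
/- Let Z, X be topological spaces, δ : Z → X a continuous open surjection, f : X → ℝ, p < q rationals, and P ⊆ X. Then δ⁻¹(D_{f,p,q}(P)) = D_{f∘δ,p,q}(δ⁻¹(P)). -/
/-- The Bourgain derivative of `P` for `f` and rationals `p < q`. -/
def bDeriv {X : Type*} [TopologicalSpace X] (f : X → ℝ) (p q : ℚ) (P : Set X) : Set X :=
  P ∩ closure {y | y ∈ P ∧ f y ≤ (p : ℝ)} ∩ closure {y | y ∈ P ∧ (q : ℝ) ≤ f y}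

theorem preimage_bDeriv {Z X : Type*} [TopologicalSpace Z] [TopologicalSpace X]
    (δ : Z → X) (hc : Continuous δ) (ho : IsOpenMap δ) (hs : Function.Surjective δ)
    (f : X → ℝ) (p q : ℚ) (hpq : p < q) (P : Set X) :
    δ ⁻¹' (bDeriv f p q P) = bDeriv (f ∘ δ) p q (δ ⁻¹' P) := by
  -- Preimages under a continuous open map commute with closures.
  simp only [bDeriv, Set.preimage_inter, ho.preimage_closure_eq_closure_preimage hc]
  rfl
end

section
/- Let Q be a preorder and let ℬ : (ℕ → ℕ) → Q be m-σ-join-irreducible, i.e., there exists m ∈ ℕ such that ℬ ≤_w ℬ↾m. Then for every 𝒜 : (ℕ → ℕ) → Q, 𝒜 ≤_mw ℬ if and only if 𝒜 ≤_w ℬ. -/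
/-!
An m-Wadge reduction is a countable family of Wadge reductions, one on each clopen piece
`{X | X 0 = n}`; since these pieces partition Baire space, the family glues to a single continuous
map, so `MWRed 𝒜 ℬ` always gives `WRed 𝒜 ℬ`. Join-irreducibility is what the converse needs: a Wadge
reduction of `𝒜` to `ℬ` composes with the reduction of `ℬ` to `ℬ↾m`, and the composite reduces
every piece of `𝒜` to the one piece `ℬ↾m`.
-/

/-- `n⌢X`: prepend `n` to the sequence `X`. -/
def consSeq (n : ℕ) (X : ℕ → ℕ) : ℕ → ℕ
  | 0 => n
  | (j + 1) => X j

/-- `Q`-Wadge reducibility. -/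
def WRed {Q : Type*} [Preorder Q] (𝒜 ℬ : (ℕ → ℕ) → Q) : Prop :=
  ∃ θ : (ℕ → ℕ) → (ℕ → ℕ), Continuous θ ∧ ∀ X, 𝒜 X ≤ ℬ (θ X)

/-- `Q`-`m`-Wadge reducibility. -/
def MWRed {Q : Type*} [Preorder Q] (𝒜 ℬ : (ℕ → ℕ) → Q) : Prop :=
  ∀ n : ℕ, ∃ m : ℕ, ∃ θ : (ℕ → ℕ) → (ℕ → ℕ), Continuous θ ∧
    ∀ X, 𝒜 (consSeq n X) ≤ ℬ (consSeq m (θ X))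

theorem continuous_consSeq (n : ℕ) : Continuous (consSeq n) := by
  refine continuous_pi fun j => ?_
  cases j with
  | zero => exact continuous_const
  | succ j => exact continuous_apply j

theorem consSeq_head_tail (X : ℕ → ℕ) : consSeq (X 0) (fun j => X (j + 1)) = X := by
  funext j
  cases j <;> rfl

theorem MWRed.wRed {Q : Type*} [Preorder Q] {𝒜 ℬ : (ℕ → ℕ) → Q} (h : MWRed 𝒜 ℬ) :
    WRed 𝒜 ℬ := by
  choose m θ hθ hle using h
  refine ⟨fun X => consSeq (m (X 0)) (θ (X 0) (fun j => X (j + 1))), ?_, fun X => ?_⟩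
  -- The head ranges over a discrete space, so continuity need only be checked for each fixed head.
  · have hglue : Continuous fun p : ℕ × (ℕ → ℕ) => consSeq (m p.1) (θ p.1 p.2) :=
      continuous_prod_of_discrete_left.mpr fun n => (continuous_consSeq (m n)).comp (hθ n)
    have hsplit : Continuous fun X : ℕ → ℕ => (X 0, fun j => X (j + 1)) := by fun_prop
    exact hglue.comp hsplit
  · simpa only [consSeq_head_tail] using hle (X 0) (fun j => X (j + 1))

theorem mwRed_iff_wRed_of_m_sigma_join_irreducible
    {Q : Type*} [Preorder Q] (ℬ : (ℕ → ℕ) → Q)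
    (hji : ∃ m : ℕ, WRed ℬ (fun X => ℬ (consSeq m X))) :
    ∀ 𝒜 : (ℕ → ℕ) → Q, MWRed 𝒜 ℬ ↔ WRed 𝒜 ℬ := by
  obtain ⟨m, η, hη, hm⟩ := hji
  refine fun 𝒜 => ⟨MWRed.wRed, fun ⟨θ, hθ, hle⟩ n => ?_⟩
  exact ⟨m, fun X => η (θ (consSeq n X)), hη.comp (hθ.comp (continuous_consSeq n)),
    fun X => (hle _).trans (hm _)⟩
end

section
/- For all functions f, g : (ℕ → Bool) → ℝ, the following are equivalent: (i) for every rational p and every positive rational ε there exist a rational r, a positive rational δ, and a continuous θ : (ℕ → Bool) → (ℕ → Bool) such that for all x, g(θ x) < r + δ implies f(x) < p + ε, and g(θ x) > r − δ implies f(x) > p − ε; (ii) f ≤_m g, i.e., for all rationals p < q there exist rationals r < s and a continuous θ : (ℕ → Bool) → (ℕ → Bool) such that for all x, f(x) ≤ p implies g(θ x) ≤ r, and f(x) ≥ q implies g(θ x) ≥ s. -/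
theorem DDW_mRed_equivalent_definitions (f g : (ℕ → Bool) → ℝ) :
    (∀ p ε : ℚ, 0 < ε → ∃ r δ : ℚ, 0 < δ ∧ ∃ θ : (ℕ → Bool) → (ℕ → Bool), Continuous θ ∧
      ∀ x, (g (θ x) < (r : ℝ) + (δ : ℝ) → f x < (p : ℝ) + (ε : ℝ)) ∧
           ((r : ℝ) - (δ : ℝ) < g (θ x) → (p : ℝ) - (ε : ℝ) < f x)) ↔
    (∀ p q : ℚ, p < q → ∃ r s : ℚ, r < s ∧ ∃ θ : (ℕ → Bool) → (ℕ → Bool), Continuous θ ∧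
      ∀ x, (f x ≤ (p : ℝ) → g (θ x) ≤ (r : ℝ)) ∧ ((q : ℝ) ≤ f x → (s : ℝ) ≤ g (θ x))) := by
  -- The two implications in each condition are contrapositives of those in the other, under
  -- the change of variables between an interval's endpoints and its midpoint and half-length.
  constructor
  · intro h p q hpq
    obtain ⟨r, δ, hδ, θ, hθ, H⟩ := h ((p + q) / 2) ((q - p) / 2) (by linarith)
    refine ⟨r - δ, r + δ, by linarith, θ, hθ, fun x => ⟨fun hx => ?_, fun hx => ?_⟩⟩
    · by_contra! hc
      push_cast at hc
      have := (H x).2 hc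
      push_cast at this
      linarith
    · by_contra! hc
      push_cast at hc
      have := (H x).1 hc
      push_cast at this
      linarith
  · intro h p ε hε
    obtain ⟨r, s, hrs, θ, hθ, H⟩ := h (p - ε) (p + ε) (by linarith)
    refine ⟨(r + s) / 2, (s - r) / 2, by linarith, θ, hθ, fun x => ⟨fun hx => ?_, fun hx => ?_⟩⟩
    · by_contra! hc
      have := (H x).2 (by push_cast; exact hc)
      push_cast at hx
      linarith
    · by_contra! hc
      have := (H x).1 (by push_cast; exact hc)
      push_cast at hx
      linarith
end

section
/- Let f, g : (ℕ → ℕ) → ℝ be continuous functions with g nonconstant. Then f ≤_m g. In particular, any two nonconstant continuous real-valued functions on Baire space are m-equivalent. -/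
/-!
Baire space is strongly zero-dimensional: disjoint closed sets are separated by a clopen set
(`exists_isLocallyConstant_separating`). Given `p < q`, separate `{f ≤ p}` from `{f ≥ q}` in this
way, and choose `a`, `b` with `g a < g b` and rationals `g a < r < s < g b`. The map `θ` taking the
value `a` on the piece containing `{f ≤ p}` and `b` on the other piece is locally constant, hence
continuous, and it witnesses the reduction.
-/

/-- `f ≤_m g`. -/
def MRed {α β : Type*} [TopologicalSpace α] [TopologicalSpace β]
    (f : α → ℝ) (g : β → ℝ) : Prop :=
  ∀ p q : ℚ, p < q → ∃ r s : ℚ, r < s ∧ ∃ θ : α → β, Continuous θ ∧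
    ∀ x, (f x ≤ (p : ℝ) → g (θ x) ≤ (r : ℝ)) ∧ ((q : ℝ) ≤ f x → (s : ℝ) ≤ g (θ x))

open PiNat in
/-- Disjoint closed subsets of Baire space are separated by a locally constant predicate. The
predicate looks at the shortest cylinder around `x` that misses `A` or `B`, and asks whether it
misses `A`; both the length and the answer depend only on that cylinder. -/
theorem exists_isLocallyConstant_separating {A B : Set (ℕ → ℕ)} (hA : IsClosed A)
    (hB : IsClosed B) (hAB : Disjoint A B) :
    ∃ P : (ℕ → ℕ) → Prop, IsLocallyConstant P ∧ (∀ x ∈ A, ¬ P x) ∧ ∀ x ∈ B, P x := by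
  classical
  have key : ∀ x : ℕ → ℕ, ∃ n, Disjoint A (cylinder x n) ∨ Disjoint B (cylinder x n) := by
    intro x
    by_cases hx : x ∈ A
    · obtain ⟨n, hn⟩ := exists_disjoint_cylinder hB (Set.disjoint_left.1 hAB hx)
      exact ⟨n, Or.inr hn⟩
    · obtain ⟨n, hn⟩ := exists_disjoint_cylinder hA hx
      exact ⟨n, Or.inl hn⟩
  refine ⟨fun x => Disjoint A (cylinder x (Nat.find (key x))), ?_, ?_, ?_⟩
  · refine (IsLocallyConstant.iff_exists_open _).2 fun x =>
      ⟨cylinder x (Nat.find (key x)), isOpen_cylinder _ _ _, self_mem_cylinder _ _, ?_⟩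
    intro y hy
    have hcyl : ∀ m ≤ Nat.find (key x), cylinder y m = cylinder x m := fun m hm =>
      mem_cylinder_iff_eq.1 (cylinder_anti x hm hy)
    have hfind : Nat.find (key y) = Nat.find (key x) := by
      rw [Nat.find_eq_iff]
      refine ⟨?_, fun m hm => ?_⟩
      · rw [hcyl _ le_rfl]
        exact Nat.find_spec (key x)
      · rw [hcyl _ hm.le]
        exact Nat.find_min (key x) hm
    simp only [hfind, hcyl _ le_rfl]
  · intro x hx h
    exact Set.disjoint_left.1 h hx (self_mem_cylinder _ _)
  · intro x hx
    exact (Nat.find_spec (key x)).resolve_right fun h =>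
      Set.disjoint_left.1 h hx (self_mem_cylinder _ _)

theorem continuous_mRed_nonconstant (f g : (ℕ → ℕ) → ℝ)
    (hf : Continuous f) (hg : Continuous g)
    (hgnc : ∃ x y : ℕ → ℕ, g x ≠ g y) :
    MRed f g := by
  classical
  obtain ⟨a, b, hab⟩ : ∃ a b, g a < g b := by
    obtain ⟨x, y, hxy⟩ := hgnc
    rcases hxy.lt_or_gt with h | h
    exacts [⟨x, y, h⟩, ⟨y, x, h⟩]
  intro p q hpq
  obtain ⟨r, har, hrb⟩ := exists_rat_btwn hab
  obtain ⟨s, hrs, hsb⟩ := exists_rat_btwn hrb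
  have hpq' : (p : ℝ) < q := by exact_mod_cast hpq
  obtain ⟨P, hP, hPA, hPB⟩ := exists_isLocallyConstant_separating
    (isClosed_le hf (continuous_const (y := (p : ℝ))))
    (isClosed_le (continuous_const (y := (q : ℝ))) hf)
    (Set.disjoint_left.2 fun x (h₁ : f x ≤ p) (h₂ : (q : ℝ) ≤ f x) => by linarith)
  refine ⟨r, s, by exact_mod_cast hrs, fun x => if P x then b else a,
    (hP.comp fun c : Prop => if c then b else a).continuous, fun x => ⟨fun h => ?_, fun h => ?_⟩⟩
  · simpa only [if_neg (hPA x h)] using har.le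
  · simpa only [if_pos (hPB x h)] using hsb.le
end

section
/- Let Q be a preorder, 𝒜 : (ℕ → Bool) → Q, and (𝒜_n)_{n∈ℕ} a sequence of functions (ℕ → ℕ) → Q; define the countable join ⊕_n 𝒜_n : (ℕ → ℕ) → Q by (⊕_n 𝒜_n)(Y) = 𝒜_{Y 0}(Y ∘ (· + 1)). If there is a continuous θ : (ℕ → Bool) → (ℕ → ℕ) with 𝒜(X) ≤ (⊕_n 𝒜_n)(θ X) for all X, then there is k ∈ ℕ such that θ(X)(0) < k for all X; hence 𝒜 is Q-Wadge reducible to the finite join ⊕_{n<k} 𝒜_n. -/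
/-! The map `X ↦ θ X 0` is continuous from the compact Cantor space to the discrete space `ℕ`, so its
range is bounded. Splitting `θ X` into its head (now an element of `Fin k`) and its tail is
continuous and gives the reduction to the finite join. -/

/-- The countable join `⊕ₙ 𝒜ₙ` as a function on Baire space. -/
def countJoin {Q : Type*} (𝒜s : ℕ → (ℕ → ℕ) → Q) : (ℕ → ℕ) → Q :=
  fun Y => 𝒜s (Y 0) (fun i => Y (i + 1))

theorem compact_reduction_to_countable_join_factors_finitely
    {Q : Type*} [Preorder Q] (𝒜 : (ℕ → Bool) → Q) (𝒜s : ℕ → (ℕ → ℕ) → Q)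
    (θ : (ℕ → Bool) → (ℕ → ℕ)) (hθ : Continuous θ)
    (hred : ∀ X, 𝒜 X ≤ countJoin 𝒜s (θ X)) :
    ∃ k : ℕ, (∀ X, θ X 0 < k) ∧
      ∃ θ' : (ℕ → Bool) → Fin k × (ℕ → ℕ), Continuous θ' ∧
        ∀ X, 𝒜 X ≤ 𝒜s ((θ' X).1 : ℕ) ((θ' X).2) := by
  have h0 : Continuous fun X => θ X 0 := (continuous_apply 0).comp hθ
  obtain ⟨b, hb⟩ := (isCompact_range h0).bddAbove
  have hlt : ∀ X, θ X 0 < b + 1 := fun X => Nat.lt_succ_of_le (hb ⟨X, rfl⟩)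
  refine ⟨b + 1, hlt, fun X => (⟨θ X 0, hlt X⟩, fun i => θ X (i + 1)), ?_, hred⟩
  refine Continuous.prodMk ?_ (continuous_pi fun i => (continuous_apply (i + 1)).comp hθ)
  -- The index map is locally constant, because its composite with `Fin.val` is.
  exact (IsLocallyConstant.desc _ Fin.val ((IsLocallyConstant.iff_continuous _).2 h0)
    Fin.val_injective).continuous
end

section
/- Let A ⊆ (ℕ → ℕ). Suppose there is a continuous function θ : (ℕ → Option ℕ) → (ℕ → ℕ) such that for every X : ℕ → Option ℕ having infinitely many indices n with X n ≠ none, one has θ(X) ∈ A ↔ X^p ∈ A, where X^p : ℕ → ℕ enumerates, in increasing order of index, the values of the non-none entries of X. Then there exist a set B ⊆ (ℕ → Bool) and continuous maps u : (ℕ → Bool) → (ℕ → ℕ) and v : (ℕ → ℕ) → (ℕ → Bool) such that B = u⁻¹(A) and A = v⁻¹(B); that is, A (as a subset of Baire space) and B (as a subset of Cantor space) are Wadge equivalent. -/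
/-!
A point `x` of Baire space is coded by the set of codes of its nonempty finite initial segments,
which is a point of Cantor space (`encodeBool x`). The codes increase strictly along longer
segments, and the last entry of a segment is read off from its code. Hence a single continuous map
`decodeOpt`, defined on all of Cantor space and acting bit by bit, turns any `y` into a
sequence with passes in such a way that `removePasses (decodeOpt (encodeBool x)) = x`. Taking
`u = θ ∘ decodeOpt`, `B = u⁻¹(A)` and `v = encodeBool`, the hypothesis on `θ` gives
`v x ∈ B ↔ θ (decodeOpt (v x)) ∈ A ↔ x ∈ A`.
-/

/-- `Option ℕ` carries the discrete topology (`none` is a "pass"). -/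
instance : TopologicalSpace (Option ℕ) := ⊥

instance : DiscreteTopology (Option ℕ) := ⟨rfl⟩

/-- Remove all `none` ("pass") entries from `X`, enumerating the values of the
non-`none` entries in increasing order of index. -/
noncomputable def removePasses (X : ℕ → Option ℕ) : ℕ → ℕ :=
  fun n => (X (Nat.nth (fun m => X m ≠ none) n)).getD 0

/-- The code of the initial segment of `x` of length `k`: the empty segment has code `0`, and a
segment with last entry `a` whose remaining part has code `c` has code `Nat.pair a c + 1`. -/
def prefixCode (x : ℕ → ℕ) : ℕ → ℕ
  | 0 => 0
  | k + 1 => Nat.pair (x k) (prefixCode x k) + 1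

theorem prefixCode_strictMono (x : ℕ → ℕ) : StrictMono (prefixCode x) :=
  strictMono_nat_of_lt_succ fun k => Nat.lt_succ_of_le (Nat.right_le_pair (x k) (prefixCode x k))

theorem continuous_prefixCode (k : ℕ) : Continuous fun x : ℕ → ℕ => prefixCode x k := by
  induction k with
  | zero => exact continuous_const
  | succ k ih =>
    have h : Continuous fun q : ℕ × ℕ => Nat.pair q.1 q.2 + 1 := continuous_of_discreteTopology
    exact h.comp ((continuous_apply k).prodMk ih)

open Classical in
/-- The characteristic function of the set of codes of nonempty initial segments of `x`. Since
`prefixCode x (k + 1) > k`, only indices `k < n` can yield the value `n`, so bounding `k` loses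
nothing and makes the dependence on `x` visibly finite. -/
noncomputable def encodeBool (x : ℕ → ℕ) (n : ℕ) : Bool :=
  decide (∃ k : Fin n, prefixCode x (k + 1) = n)

theorem encodeBool_eq_true_iff (x : ℕ → ℕ) (n : ℕ) :
    encodeBool x n = true ↔ n ∈ Set.range fun k => prefixCode x (k + 1) := by
  simp only [encodeBool, decide_eq_true_eq, Set.mem_range]
  constructor
  · rintro ⟨k, hk⟩
    exact ⟨k, hk⟩
  · rintro ⟨k, hk⟩
    have h : k + 1 ≤ prefixCode x (k + 1) := (prefixCode_strictMono x).le_apply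
    exact ⟨⟨k, by omega⟩, hk⟩

theorem continuous_encodeBool : Continuous encodeBool := by
  classical
  refine continuous_pi fun n => ?_
  have h : Continuous fun c : Fin n → ℕ => decide (∃ k, c k = n) := continuous_of_discreteTopology
  have h' := h.comp (continuous_pi fun k : Fin n => continuous_prefixCode (k + 1))
  convert h' using 2
  simp only [encodeBool, Function.comp_apply]

/-- A false bit becomes a pass, and a true bit at `n` becomes the last entry of the segment
coded by `n` (at `n = 0`, the code of the empty segment, an irrelevant value). -/
def decodeOpt (y : ℕ → Bool) (n : ℕ) : Option ℕ :=
  if y n = true then some (Nat.unpair (n - 1)).1 else none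

theorem continuous_decodeOpt : Continuous decodeOpt := by
  refine continuous_pi fun n => ?_
  have h : Continuous fun b : Bool => if b = true then some (Nat.unpair (n - 1)).1 else none :=
    continuous_of_discreteTopology
  exact h.comp (continuous_apply n)

theorem setOf_decodeOpt_encodeBool_ne_none (x : ℕ → ℕ) :
    {n | decodeOpt (encodeBool x) n ≠ none} = Set.range fun k => prefixCode x (k + 1) := by
  ext n
  rw [← encodeBool_eq_true_iff]
  simp [decodeOpt]

theorem strictMono_prefixCode_succ (x : ℕ → ℕ) : StrictMono fun k => prefixCode x (k + 1) :=
  fun _ _ h => prefixCode_strictMono x (Nat.succ_lt_succ h)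

theorem infinite_decodeOpt_encodeBool (x : ℕ → ℕ) :
    {n | decodeOpt (encodeBool x) n ≠ none}.Infinite := by
  rw [setOf_decodeOpt_encodeBool_ne_none]
  exact Set.infinite_range_of_injective (strictMono_prefixCode_succ x).injective

theorem removePasses_decodeOpt_encodeBool (x : ℕ → ℕ) :
    removePasses (decodeOpt (encodeBool x)) = x := by
  have hinf := infinite_decodeOpt_encodeBool x
  -- Two strictly increasing enumerations of the same set coincide.
  have hnth : Nat.nth (fun n => decodeOpt (encodeBool x) n ≠ none)
      = fun k => prefixCode x (k + 1) := by
    refine ((Nat.nth_strictMono hinf).range_inj (strictMono_prefixCode_succ x)).1 ?_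
    rw [Nat.range_nth_of_infinite hinf]
    exact setOf_decodeOpt_encodeBool_ne_none x
  funext k
  have hk : encodeBool x (prefixCode x (k + 1)) = true :=
    (encodeBool_eq_true_iff x _).2 ⟨k, rfl⟩
  simp only [removePasses, hnth]
  rw [decodeOpt, if_pos hk]
  simp [prefixCode]

theorem nonselfdual_wadge_equivalent_to_cantor_subset
    (A : Set (ℕ → ℕ))
    (θ : (ℕ → Option ℕ) → (ℕ → ℕ)) (hθ : Continuous θ)
    (hθA : ∀ X : ℕ → Option ℕ, {n | X n ≠ none}.Infinite →
      (θ X ∈ A ↔ removePasses X ∈ A)) :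
    ∃ B : Set (ℕ → Bool), ∃ u : (ℕ → Bool) → (ℕ → ℕ), ∃ v : (ℕ → ℕ) → (ℕ → Bool),
      Continuous u ∧ Continuous v ∧ B = u ⁻¹' A ∧ A = v ⁻¹' B := by
  refine ⟨(θ ∘ decodeOpt) ⁻¹' A, θ ∘ decodeOpt, encodeBool, hθ.comp continuous_decodeOpt,
    continuous_encodeBool, rfl, ?_⟩
  ext x
  have h := hθA _ (infinite_decodeOpt_encodeBool x)
  rw [removePasses_decodeOpt_encodeBool] at h
  exact h.symm
end

section
/- Let f, g : (ℕ → ℕ) → ℝ with g nonconstant. Then f ≤_sW^c ĝ if and only if there exist a continuous Ψ : ℕ × (ℕ → ℕ) → (ℕ → ℕ) and a function Φ : (ℕ → ℕ) × (ℕ → ℝ) → ℝ continuous on the set { (X, (g(Ψ(i,X)))_{i∈ℕ}) | X : ℕ → ℕ } such that f(X) = Φ(X, (g(Ψ(i,X)))_{i∈ℕ}) for all X. -/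
/-!
For the nontrivial direction, the input `X` is coded into additional queries to `g`. Pick `p`, `q`
with `g p ≠ g q`. The even-indexed queries are those of the given reduction; the odd-indexed ones
range over pairs `(a, b)` and ask for `p` if `X a = b` and for `q` otherwise. The answers determine
`X`, and continuously so: the single answer at `(a, X a)` being different from `g q` already forces
the value at `a`. So the input can be recovered from the answers and handed to the given `Φ`.
-/

/-- `f ≤_sW^c ĝ`: parallelized continuous strong Weihrauch reducibility. -/
def PCSWRed (f g : (ℕ → ℕ) → ℝ) : Prop :=
  ∃ Ψ : ℕ × (ℕ → ℕ) → (ℕ → ℕ), Continuous Ψ ∧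
    ∃ Φ : (ℕ → ℝ) → ℝ,
      ContinuousOn Φ {y | ∃ X : ℕ → ℕ, y = fun i => g (Ψ (i, X))} ∧
      ∀ X, f X = Φ (fun i => g (Ψ (i, X)))

/-- The given queries `Ψ` at even indices, interleaved with queries to `p` or `q` at odd indices
that code the graph of the input. -/
def codedQuery (Ψ : ℕ × (ℕ → ℕ) → (ℕ → ℕ)) (p q : ℕ → ℕ) (z : ℕ × (ℕ → ℕ)) : ℕ → ℕ :=
  if z.1 % 2 = 0 then Ψ (z.1 / 2, z.2)
  else if z.2 (z.1 / 2).unpair.1 = (z.1 / 2).unpair.2 then p else q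

theorem codedQuery_even (Ψ : ℕ × (ℕ → ℕ) → (ℕ → ℕ)) (p q : ℕ → ℕ) (k : ℕ) (X : ℕ → ℕ) :
    codedQuery Ψ p q (2 * k, X) = Ψ (k, X) := by
  simp [codedQuery]

theorem codedQuery_odd (Ψ : ℕ × (ℕ → ℕ) → (ℕ → ℕ)) (p q : ℕ → ℕ) (a b : ℕ) (X : ℕ → ℕ) :
    codedQuery Ψ p q (2 * Nat.pair a b + 1, X) = if X a = b then p else q := by
  have h1 : (2 * Nat.pair a b + 1) % 2 = 1 := by omega
  have h2 : (2 * Nat.pair a b + 1) / 2 = Nat.pair a b := by omega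
  simp [codedQuery, h1, h2]

theorem continuous_codedQuery {Ψ : ℕ × (ℕ → ℕ) → (ℕ → ℕ)} (hΨ : Continuous Ψ) (p q : ℕ → ℕ) :
    Continuous (codedQuery Ψ p q) := by
  rw [continuous_prod_of_discrete_left]
  intro i
  by_cases hi : i % 2 = 0
  · simp only [codedQuery, hi, if_true]
    fun_prop
  · simp only [codedQuery, hi, if_false]
    exact (continuous_of_discreteTopology
      (f := fun n : ℕ => if n = (i / 2).unpair.2 then p else q)).comp
      (continuous_apply (i / 2).unpair.1)

theorem pcsW_iff_with_input (f g : (ℕ → ℕ) → ℝ)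
    (hgnc : ∃ x y : ℕ → ℕ, g x ≠ g y) :
    PCSWRed f g ↔
      ∃ Ψ : ℕ × (ℕ → ℕ) → (ℕ → ℕ), Continuous Ψ ∧
        ∃ Φ : (ℕ → ℕ) × (ℕ → ℝ) → ℝ,
          ContinuousOn Φ {z | ∃ X : ℕ → ℕ, z = (X, fun i => g (Ψ (i, X)))} ∧
          ∀ X, f X = Φ (X, fun i => g (Ψ (i, X))) := by
  constructor
  · rintro ⟨Ψ, hΨ, Φ, hΦ, hf⟩
    refine ⟨Ψ, hΨ, fun z => Φ z.2, hΦ.comp continuousOn_snd ?_, hf⟩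
    rintro _ ⟨X, rfl⟩
    exact ⟨X, rfl⟩
  · rintro ⟨Ψ, hΨ, Φ, hΦ, hf⟩
    obtain ⟨p, q, hpq⟩ := hgnc
    set F : (ℕ → ℕ) → ℕ → ℝ := fun X i => g (codedQuery Ψ p q (i, X)) with hF
    have even : ∀ X k, F X (2 * k) = g (Ψ (k, X)) := fun X k => by
      simp only [hF, codedQuery_even]
    have key : ∀ X a b, F X (2 * Nat.pair a b + 1) ≠ g q ↔ X a = b := fun X a b => by
      simp only [hF, codedQuery_odd]
      split_ifs with h <;> simp [h, hpq]
    have inj : Function.Injective F := fun X Y h => funext fun a => by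
      have := (key X a (Y a)).1
      rw [h] at this
      exact this ((key Y a (Y a)).2 rfl)
    have hD : ∀ X, Function.invFun F (F X) = X := Function.leftInverse_invFun inj
    have hDc : ContinuousOn (Function.invFun F) {y | ∃ X, y = F X} := by
      rintro _ ⟨X, rfl⟩
      refine tendsto_pi_nhds.2 fun a => ?_
      rw [hD]
      refine tendsto_nhds_of_eventually_eq ?_
      have hn : ∀ᶠ y in nhds (F X), y (2 * Nat.pair a (X a) + 1) ≠ g q :=
        (continuous_apply _).continuousAt.eventually_ne ((key X a (X a)).2 rfl)
      filter_upwards [nhdsWithin_le_nhds hn, self_mem_nhdsWithin]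
      rintro _ hy ⟨Y, rfl⟩
      rw [hD]
      exact (key Y a (X a)).1 hy
    refine ⟨codedQuery Ψ p q, continuous_codedQuery hΨ p q,
      fun y => Φ (Function.invFun F y, fun k => y (2 * k)), ?_, fun X => ?_⟩
    · refine hΦ.comp (hDc.prodMk (Continuous.continuousOn (by fun_prop))) ?_
      rintro _ ⟨X, rfl⟩
      refine ⟨X, ?_⟩
      change (Function.invFun F (F X), fun k => F X (2 * k)) = _
      simp only [hD, even]
    · change f X = Φ (Function.invFun F (F X), fun k => F X (2 * k))
      simp only [hD, even]
      exact hf X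
end

section
/- For every nonconstant function g : (ℕ → ℕ) → ℝ there exist a continuous ρ : ℕ × (ℕ → Bool) → (ℕ → ℕ) and a function τ : (ℕ → ℝ) → (ℕ → Bool) continuous on the set { (g(ρ(i,X)))_{i∈ℕ} | X : ℕ → Bool } such that τ((g(ρ(i,X)))_{i∈ℕ}) = X for all X : ℕ → Bool. (In other words, the identity on Cantor space is continuously strongly Weihrauch reducible to the parallelization of g.) -/
theorem id_cantor_pcsW_reducible_to_nonconstant (g : (ℕ → ℕ) → ℝ)
    (hgnc : ∃ x y : ℕ → ℕ, g x ≠ g y) :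
    ∃ ρ : ℕ × (ℕ → Bool) → (ℕ → ℕ), Continuous ρ ∧
      ∃ τ : (ℕ → ℝ) → (ℕ → Bool),
        ContinuousOn τ {y | ∃ X : ℕ → Bool, y = fun i => g (ρ (i, X))} ∧
        ∀ X : ℕ → Bool, τ (fun i => g (ρ (i, X))) = X := by
  classical
  obtain ⟨x, y, hxy⟩ := hgnc
  -- Encode the bit `X i` as one of two points separated by `g`.
  refine ⟨fun p => if p.2 p.1 then x else y, ?_, fun f i => decide (f i = g x), ?_, ?_⟩
  · have h : Continuous fun p : ℕ × (ℕ → Bool) => p.2 p.1 :=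
      continuous_prod_of_discrete_left.2 fun i => continuous_apply i
    exact (continuous_of_discreteTopology (f := fun b : Bool => if b then x else y)).comp h
  · -- Every coordinate of a point of the image lies in the finite, hence discrete, set `{g x, g y}`.
    refine continuousOn_pi.2 fun i => ?_
    have h : ContinuousOn (fun r : ℝ => decide (r = g x)) {g x, g y} :=
      (Set.toFinite _).continuousOn _
    refine h.comp (continuous_apply i).continuousOn ?_
    rintro _ ⟨X, rfl⟩
    cases hX : X i <;> simp [hX]
  · intro X
    funext i
    cases hX : X i <;> simp [hX, hxy.symm]
end

section
/- Let f, g : (ℕ → ℕ) → ℝ with g nonconstant. Suppose there exist functions r, s : ℚ × ℚ × (ℕ → ℕ) → ℚ and ψ : ℚ × ℚ × (ℕ → ℕ) → (ℕ → ℕ) such that for each pair of rationals p < q the maps X ↦ r(p,q,X), X ↦ s(p,q,X), and X ↦ ψ(p,q,X) are continuous, and for all X: r(p,q,X) < s(p,q,X); f(X) ≤ p implies g(ψ(p,q,X)) ≤ r(p,q,X); and f(X) ≥ q implies g(ψ(p,q,X)) ≥ s(p,q,X). (This says that the level-set function of f is Wadge reducible to that of g.) Then f ≤_sW^c ĝ.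 -/
/-!
The value `f X` is determined, continuously, by countably many values of `g`. For rationals `p < q`
let `m` be the midpoint of `r` and `s`, a locally constant rational function of `X`, so that
`f X ≤ p` forces `g (ψ (p, q, X)) < m` and `f X ≥ q` forces `g (ψ (p, q, X)) > m`. Since `g` takes
two distinct values `g a ≠ g b`, the value of `m` is itself coded by values of `g`: for every
rational `k`, query `g` at `a` if `m = k` and at `b` otherwise. Let `G X` be the sequence of all
these answers. If `f X < c`, choose rationals `f X < p < q < c`; then `g (ψ (p, q, X)) < m`, and
whenever `G X'` is close to `G X` the midpoint is the same and the strict inequality persists, so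
`f X' < q < c`. Lower bounds are symmetric. Hence `f X' → f X` as `G X' → G X`
(`tendsto_comap_of_midpoint`), which says precisely that `f` factors through `G` by a map that is
continuous on the range of `G` (`exists_continuousOn_factor`).
-/

open Filter Topology

/-- The hypothesis also gives well-definedness of the factor: if `G X' = G X`, then `pure X'` lies
below the filter `comap G (𝓝 (G X))`. -/
lemma exists_continuousOn_factor {α β γ : Type*} [TopologicalSpace β] [TopologicalSpace γ]
    [T2Space γ] [Nonempty γ] (G : α → β) (f : α → γ)
    (h : ∀ x, Tendsto f (comap G (𝓝 (G x))) (𝓝 (f x))) :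
    ∃ Φ : β → γ, ContinuousOn Φ (Set.range G) ∧ ∀ x, f x = Φ (G x) := by
  have hfac : Function.FactorsThrough f G := by
    intro x x' hxx
    have hle : pure x' ≤ comap G (𝓝 (G x)) := by
      rw [← map_le_iff_le_comap, map_pure, hxx]
      exact pure_le_nhds _
    exact tendsto_nhds_unique ((h x).mono_left hle) (tendsto_pure_nhds f x')
  let Φ : β → γ := Function.extend G f (fun _ => Classical.arbitrary γ)
  have hΦ : ∀ x, Φ (G x) = f x := fun x => hfac.extend_apply _ x
  refine ⟨Φ, ?_, fun x => (hΦ x).symm⟩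
  rintro _ ⟨x, rfl⟩
  rw [ContinuousWithinAt, hΦ, nhdsWithin, ← map_comap, tendsto_map'_iff]
  exact (h x).congr fun x' => (hΦ x').symm

/-- The queries made to `g`: at `(p, q, none)` the point `ψ (p, q, X)`, and at `(p, q, some k)`
one of `a`, `b`, according to whether the threshold `m p q X` equals `k`. Indices with `q ≤ p` carry
no information and are sent to `a`. -/
noncomputable def query (a b : ℕ → ℕ) (m : ℚ → ℚ → (ℕ → ℕ) → ℚ)
    (ψ : ℚ × ℚ × (ℕ → ℕ) → (ℕ → ℕ)) : ℚ × ℚ × Option ℚ → (ℕ → ℕ) → (ℕ → ℕ)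
  | (p, q, none), X => if p < q then ψ (p, q, X) else a
  | (p, q, some k), X => if p < q then (if m p q X = k then a else b) else a

lemma continuous_query {a b : ℕ → ℕ} {m : ℚ → ℚ → (ℕ → ℕ) → ℚ}
    {ψ : ℚ × ℚ × (ℕ → ℕ) → (ℕ → ℕ)}
    (hm : ∀ p q, p < q → IsLocallyConstant (m p q))
    (hψ : ∀ p q : ℚ, p < q → Continuous fun X : ℕ → ℕ => ψ (p, q, X))
    (i : ℚ × ℚ × Option ℚ) : Continuous (query a b m ψ i) := by
  obtain ⟨p, q, _ | k⟩ := i <;> by_cases h : p < q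
  · exact (hψ p q h).congr fun X => by simp [query, h]
  · exact (continuous_const (y := a)).congr fun X => by simp [query, h]
  · exact ((hm p q h).comp fun l => if l = k then a else b).continuous.congr fun X => by
      simp [query, h]
  · exact (continuous_const (y := a)).congr fun X => by simp [query, h]

/-- Convergence of the answers of `g` to the queries forces convergence of `f`. -/
lemma tendsto_comap_of_midpoint {f g : (ℕ → ℕ) → ℝ} {a b : ℕ → ℕ} (hab : g a ≠ g b)
    {m : ℚ → ℚ → (ℕ → ℕ) → ℚ} {ψ : ℚ × ℚ × (ℕ → ℕ) → (ℕ → ℕ)}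
    (hlo : ∀ p q : ℚ, p < q → ∀ X, f X ≤ p → g (ψ (p, q, X)) < m p q X)
    (hhi : ∀ p q : ℚ, p < q → ∀ X, (q : ℝ) ≤ f X → (m p q X : ℝ) < g (ψ (p, q, X)))
    {l : Filter (ℕ → ℕ)} {X : ℕ → ℕ}
    (hl : ∀ i, Tendsto (fun X' => g (query a b m ψ i X')) l (𝓝 (g (query a b m ψ i X)))) :
    Tendsto f l (𝓝 (f X)) := by
  have hm : ∀ p q : ℚ, p < q → ∀ᶠ X' in l, m p q X' = m p q X := by
    intro p q hpq
    have h := hl (p, q, some (m p q X))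
    simp only [query, hpq, if_true] at h
    filter_upwards [h.eventually_ne hab] with X' hX'
    by_contra hne
    simp [hne] at hX'
  have hz : ∀ p q : ℚ, p < q →
      Tendsto (fun X' => g (ψ (p, q, X'))) l (𝓝 (g (ψ (p, q, X)))) := by
    intro p q hpq
    simpa only [query, hpq, if_true] using hl (p, q, none)
  rw [tendsto_order]
  constructor
  · intro c hc
    obtain ⟨p, hcp, hpX⟩ := exists_rat_btwn hc
    obtain ⟨q, hpq, hqX⟩ := exists_rat_btwn hpX
    have hpq' : p < q := by exact_mod_cast hpq
    filter_upwards [hm p q hpq', (hz p q hpq').eventually_const_lt (hhi p q hpq' X hqX.le)]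
      with X' h1 h2
    by_contra! hle
    have h3 := hlo p q hpq' X' (hle.trans hcp.le)
    rw [h1] at h3
    exact lt_asymm h2 h3
  · intro c hc
    obtain ⟨q, hXq, hqc⟩ := exists_rat_btwn hc
    obtain ⟨p, hXp, hpq⟩ := exists_rat_btwn hXq
    have hpq' : p < q := by exact_mod_cast hpq
    filter_upwards [hm p q hpq', (hz p q hpq').eventually_lt_const (hlo p q hpq' X hXp.le)]
      with X' h1 h2
    by_contra! hle
    have h3 := hhi p q hpq' X' (hqc.le.trans hle)
    rw [h1] at h3
    exact lt_asymm h2 h3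


theorem wadge_of_levelsets_implies_pcsW (f g : (ℕ → ℕ) → ℝ)
    (hgnc : ∃ x y : ℕ → ℕ, g x ≠ g y)
    (r s : ℚ × ℚ × (ℕ → ℕ) → ℚ) (ψ : ℚ × ℚ × (ℕ → ℕ) → (ℕ → ℕ))
    (hcont : ∀ p q : ℚ, p < q →
      IsLocallyConstant (fun X : ℕ → ℕ => r (p, q, X)) ∧
      IsLocallyConstant (fun X : ℕ → ℕ => s (p, q, X)) ∧
      Continuous (fun X : ℕ → ℕ => ψ (p, q, X)))
    (hred : ∀ p q : ℚ, p < q → ∀ X : ℕ → ℕ,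
      r (p, q, X) < s (p, q, X) ∧
      (f X ≤ (p : ℝ) → g (ψ (p, q, X)) ≤ (r (p, q, X) : ℝ)) ∧
      ((q : ℝ) ≤ f X → (s (p, q, X) : ℝ) ≤ g (ψ (p, q, X)))) :
    PCSWRed f g := by
  obtain ⟨a, b, hab⟩ := hgnc
  obtain ⟨e, he⟩ := exists_surjective_nat (ℚ × ℚ × Option ℚ)
  let m : ℚ → ℚ → (ℕ → ℕ) → ℚ := fun p q X => (r (p, q, X) + s (p, q, X)) / 2
  have hm : ∀ p q, p < q → IsLocallyConstant (m p q) := fun p q hpq =>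
    (hcont p q hpq).1.comp₂ (hcont p q hpq).2.1 fun u v => (u + v) / 2
  have hrs : ∀ p q : ℚ, p < q → ∀ X, (r (p, q, X) : ℝ) < s (p, q, X) := fun p q hpq X => by
    exact_mod_cast (hred p q hpq X).1
  have hlo : ∀ p q : ℚ, p < q → ∀ X, f X ≤ p → g (ψ (p, q, X)) < m p q X := by
    intro p q hpq X hX
    have h1 := (hred p q hpq X).2.1 hX
    have h2 := hrs p q hpq X
    simp only [m]
    push_cast
    linarith
  have hhi : ∀ p q : ℚ, p < q → ∀ X, (q : ℝ) ≤ f X → (m p q X : ℝ) < g (ψ (p, q, X)) := by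
    intro p q hpq X hX
    have h1 := (hred p q hpq X).2.2 hX
    have h2 := hrs p q hpq X
    simp only [m]
    push_cast
    linarith
  let Ψ : ℕ × (ℕ → ℕ) → (ℕ → ℕ) := fun z => query a b m ψ (e z.1) z.2
  have hΨ : Continuous Ψ := continuous_prod_of_discrete_left.2 fun n =>
    continuous_query hm (fun p q hpq => (hcont p q hpq).2.2) (e n)
  obtain ⟨Φ, hΦ, hfΦ⟩ := exists_continuousOn_factor (fun X i => g (Ψ (i, X))) f fun X => by
    refine tendsto_comap_of_midpoint hab hlo hhi fun i => ?_
    obtain ⟨n, rfl⟩ := he i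
    have h : Tendsto (fun X' i => g (Ψ (i, X')))
        (comap (fun X' i => g (Ψ (i, X'))) (𝓝 fun i => g (Ψ (i, X))))
        (𝓝 fun i => g (Ψ (i, X))) := tendsto_comap
    exact tendsto_pi_nhds.1 h n
  refine ⟨Ψ, hΨ, Φ, hΦ.mono ?_, hfΦ⟩
  rintro _ ⟨X, rfl⟩
  exact ⟨X, rfl⟩
end
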